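/- arXiv:1711.02802 — 2 statements merged into one kernel-verified Lean document; each statement's English description precedes it below -/
import Mathlib

section
/- Let p be a prime and R̂ a commutative ring in which p is a nonzerodivisor. Let (𝒜_i)_{i∈ℤ} be p-torsion-free R̂-modules and δ_i: 𝒜_i → 𝒜_{i+1} R̂-linear maps such that for each i there is an R̂-linear map γ_i: 𝒜_i → 𝒜_{i+2} with δ_{i+1}∘δ_i = p²·γ_i. Define C_i = 𝒜_i ⊕ 𝒜_{i+1} and d_i: C_i → C_{i+1} by d_i(x, y) = (δ_i x + (−1)^i p·y, (−1)^i p·γ_i x + δ_{i+1} y). Then: (a) d_{i+1}∘d_i = 0, so (C, d) is a cochain complex of R̂-modules; (b) the reductions δ̄_i: 𝒜_i/p𝒜_i → 𝒜_{i+1}/p𝒜_{i+1} satisfy δ̄_{i+1}∘δ̄_i = 0; (c) the degreewise surjections C_i → 𝒜_i/p𝒜_i, (x, y) ↦ x mod p, form a quasi-isomorphism of cochain complexes from (C, d) to (𝒜/p𝒜, δ̄). -/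
/-!
In `dᵢ₊₁ ∘ dᵢ`, and more generally in the equation `dᵢ (x, y) = 0`, only the first component carries
information: `p` times the second component is `(-1)ⁱ δᵢ₊₁` applied to the first, and `p` is
injective. So `(x, y)` is a cocycle if and only if `p y = -(-1)ⁱ δᵢ x`. Hence every `x` with
`δᵢ x ∈ p 𝒜ᵢ₊₁` extends to a cocycle `(x, y)`, and a cocycle whose first component is
`δᵢ₋₁ u + p v` has a second component determined by `u` and `v`: it is the coboundary of
`(u, (-1)ⁱ⁻¹ v)`.
-/

section Definitions

variable {R : Type*} [CommRing R] (r : R)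
variable {M N P : Type*} [AddCommGroup M] [AddCommGroup N] [AddCommGroup P]
variable [Module R M] [Module R N] [Module R P]

variable (M) in
/-- The submodule `r M` of `M`, encoded as the range of multiplication by `r`; the complex `C` is
compared with the quotients by these submodules. -/
def smulRange : Submodule R M :=
  LinearMap.range (r • (LinearMap.id : M →ₗ[R] M))

theorem map_mem_smulRange (f : M →ₗ[R] N) {x : M} (hx : x ∈ smulRange r M) :
    f x ∈ smulRange r N := by
  obtain ⟨z, rfl⟩ := hx
  exact ⟨f z, (map_smul f r z).symm⟩

/-- The reduction `M / r M → N / r N` of a linear map modulo `r`; for `f = δᵢ` it is `δ̄ᵢ`. -/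
def reductionMap (f : M →ₗ[R] N) : (M ⧸ smulRange r M) →ₗ[R] (N ⧸ smulRange r N) :=
  Submodule.mapQ (smulRange r M) (smulRange r N) f fun _ => map_mem_smulRange r f

/-- The differential `(x, y) ↦ (f x + ε r y, ε r h x + g y)` of the resolution, for a sign `ε`. With
`f = δᵢ`, `g = δᵢ₊₁`, `h = γᵢ` and `ε = (-1)ⁱ` it is `dᵢ`. -/
def resolutionDifferential (ε : ℤˣ) (f : M →ₗ[R] N) (g : N →ₗ[R] P) (h : M →ₗ[R] P) :
    (M × N) →ₗ[R] (N × P) :=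
  LinearMap.prod
    (f.comp (LinearMap.fst R M N) + (ε : ℤ) • (r • LinearMap.snd R M N))
    ((ε : ℤ) • (r • h.comp (LinearMap.fst R M N)) + g.comp (LinearMap.snd R M N))

variable (M N) in
/-- The augmentation `(x, y) ↦ x mod r` from a term of the resolution to the reduction. -/
def resolutionProj : (M × N) →ₗ[R] (M ⧸ smulRange r M) :=
  (smulRange r M).mkQ.comp (LinearMap.fst R M N)

end Definitions

section Resolution

variable {R : Type*} [CommRing R] {r : R}
variable {M N P Q : Type*} [AddCommGroup M] [AddCommGroup N] [AddCommGroup P] [AddCommGroup Q]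
variable [Module R M] [Module R N] [Module R P] [Module R Q]
variable (ε : ℤˣ) {f : M →ₗ[R] N} {g : N →ₗ[R] P} {k : P →ₗ[R] Q}
variable {h : M →ₗ[R] P} {h' : N →ₗ[R] Q}

theorem reductionMap_comp_eq_zero (hgf : g.comp f = r • h) :
    (reductionMap r g).comp (reductionMap r f) = 0 := by
  refine Submodule.linearMap_qext _ (LinearMap.ext fun x => ?_)
  exact (Submodule.Quotient.mk_eq_zero _).mpr ⟨h x, (LinearMap.congr_fun hgf x).symm⟩

theorem resolutionDifferential_apply (x : M) (y : N) :
    resolutionDifferential r ε f g h (x, y) = (f x + ε • r • y, ε • r • h x + g y) :=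
  rfl

theorem resolutionProj_comp_resolutionDifferential :
    (resolutionProj r N P).comp (resolutionDifferential r ε f g h) =
      (reductionMap r f).comp (resolutionProj r M N) := by
  refine LinearMap.ext fun ⟨x, y⟩ => (Submodule.Quotient.eq _).mpr ⟨ε • y, ?_⟩
  change r • ε • y = f x + ε • r • y - f x
  rw [add_sub_cancel_left, smul_comm]

theorem smul_resolutionDifferential_snd (hgf : g.comp f = r ^ 2 • h) (c : M × N) :
    r • (resolutionDifferential r ε f g h c).2 =
      ε • g (resolutionDifferential r ε f g h c).1 := by
  obtain ⟨x, y⟩ := c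
  have hgfx : g (f x) = r ^ 2 • h x := LinearMap.congr_fun hgf x
  rcases Int.units_eq_one_or ε with rfl | rfl <;>
    simp only [resolutionDifferential_apply, Units.neg_smul, one_smul, map_add, map_neg, map_smul,
      hgfx] <;>
    module

theorem resolutionDifferential_eq_zero_iff (hP : IsSMulRegular P r)
    (hgf : g.comp f = r ^ 2 • h) {c : M × N} :
    resolutionDifferential r ε f g h c = 0 ↔ (resolutionDifferential r ε f g h c).1 = 0 := by
  refine ⟨fun hc => congrArg Prod.fst hc, fun hc => Prod.ext hc (hP ?_)⟩
  simp only [smul_resolutionDifferential_snd ε hgf, hc, map_zero, smul_zero, Prod.snd_zero]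

theorem resolutionDifferential_comp_eq_zero (hQ : IsSMulRegular Q r)
    (hgf : g.comp f = r ^ 2 • h) (hkg : k.comp g = r ^ 2 • h') :
    (resolutionDifferential r (-ε) g k h').comp (resolutionDifferential r ε f g h) = 0 := by
  refine LinearMap.ext fun c => (resolutionDifferential_eq_zero_iff (-ε) hQ hkg).mpr ?_
  change g (resolutionDifferential r ε f g h c).1 +
    -ε • r • (resolutionDifferential r ε f g h c).2 = 0
  rw [smul_resolutionDifferential_snd ε hgf, smul_smul, neg_mul, Int.units_mul_self,
    Units.neg_smul, one_smul, add_neg_cancel]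

theorem mem_range_resolutionDifferential (hP : IsSMulRegular P r) (hgf : g.comp f = r ^ 2 • h)
    {c : N × P} (hc : resolutionDifferential r (-ε) g k h' c = 0)
    (hπ : resolutionProj r N P c ∈ LinearMap.range (reductionMap r f)) :
    c ∈ LinearMap.range (resolutionDifferential r ε f g h) := by
  obtain ⟨x, y⟩ := c
  obtain ⟨a, ha⟩ := hπ
  obtain ⟨u, rfl⟩ := (smulRange r M).mkQ_surjective a
  obtain ⟨v, hv : r • v = x - f u⟩ := (Submodule.Quotient.eq _).mp ha.symm
  have first : (resolutionDifferential r ε f g h (u, ε • v)).1 = x := by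
    change f u + ε • r • ε • v = x
    rw [smul_comm r ε, smul_smul, Int.units_mul_self, one_smul, hv, add_sub_cancel]
  have cocycle : g x = ε • r • y := by
    have : g x + -ε • r • y = 0 := congrArg Prod.fst hc
    rwa [Units.neg_smul, add_neg_eq_zero] at this
  refine ⟨(u, ε • v), Prod.ext first (hP ?_)⟩
  change r • (resolutionDifferential r ε f g h (u, ε • v)).2 = r • y
  rw [smul_resolutionDifferential_snd ε hgf, first, cocycle, smul_smul, Int.units_mul_self,
    one_smul]

theorem exists_cocycle_of_reductionMap_eq_zero (hP : IsSMulRegular P r)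
    (hgf : g.comp f = r ^ 2 • h) {a : M ⧸ smulRange r M} (ha : reductionMap r f a = 0) :
    ∃ c : M × N, resolutionDifferential r ε f g h c = 0 ∧ resolutionProj r M N c = a := by
  obtain ⟨x, rfl⟩ := (smulRange r M).mkQ_surjective a
  obtain ⟨z, hz : r • z = f x⟩ := (Submodule.Quotient.mk_eq_zero _).mp ha
  refine ⟨(x, -ε • z), (resolutionDifferential_eq_zero_iff ε hP hgf).mpr ?_, rfl⟩
  change f x + ε • r • -ε • z = 0
  rw [smul_comm r (-ε), smul_smul, mul_neg, Int.units_mul_self, Units.neg_smul, one_smul, hz,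
    add_neg_cancel]

end Resolution

theorem torsionfree_resolution_quasi_iso_general {R : Type*} [CommRing R] {r : R}
    {A : ℤ → Type*} [∀ i, AddCommGroup (A i)] [∀ i, Module R (A i)]
    (hr : ∀ i, IsSMulRegular (A i) r)
    (δ : ∀ i : ℤ, A i →ₗ[R] A (i + 1)) (γ : ∀ i : ℤ, A i →ₗ[R] A (i + 1 + 1))
    (hδδ : ∀ i : ℤ, (δ (i + 1)).comp (δ i) = r ^ 2 • γ i) :
    let d := fun i : ℤ => resolutionDifferential r i.negOnePow (δ i) (δ (i + 1)) (γ i)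
    let δbar := fun i : ℤ => reductionMap r (δ i)
    let π := fun i : ℤ => resolutionProj r (A i) (A (i + 1))
    (∀ i, (d (i + 1)).comp (d i) = 0) ∧
    (∀ i, (δbar (i + 1)).comp (δbar i) = 0) ∧
    (∀ i, (π (i + 1)).comp (d i) = (δbar i).comp (π i)) ∧
    (∀ i c, d (i + 1) c = 0 → π (i + 1) c ∈ LinearMap.range (δbar i) →
      c ∈ LinearMap.range (d i)) ∧
    (∀ i a, δbar (i + 1) a = 0 →
      ∃ c, d (i + 1) c = 0 ∧ π (i + 1) c - a ∈ LinearMap.range (δbar i)) := by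
  intro d δbar π
  have d_succ (i : ℤ) : d (i + 1) = resolutionDifferential r (-i.negOnePow) (δ (i + 1))
      (δ (i + 1 + 1)) (γ (i + 1)) := by
    simp only [d, Int.negOnePow_succ]
  refine ⟨fun i => ?_, fun i => ?_, fun i => ?_, fun i c hc => ?_, fun i a ha => ?_⟩
  · rw [d_succ]
    exact resolutionDifferential_comp_eq_zero _ (hr _) (hδδ i) (hδδ (i + 1))
  · refine reductionMap_comp_eq_zero (h := r • γ i) ?_
    rw [hδδ, smul_smul, sq]
  · exact resolutionProj_comp_resolutionDifferential _
  · rw [d_succ] at hc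
    exact mem_range_resolutionDifferential _ (hr _) (hδδ i) hc
  · obtain ⟨c, hc, rfl⟩ :=
      exists_cocycle_of_reductionMap_eq_zero (i + 1).negOnePow (hr _) (hδδ (i + 1)) ha
    exact ⟨c, hc, sub_self (π (i + 1) c) ▸ zero_mem _⟩

theorem torsionfree_resolution_quasi_iso
    (p : ℕ) (hp : p.Prime) (R : Type*) [CommRing R]
    (hpnzd : (p : R) ∈ nonZeroDivisors R)
    (A : ℤ → Type*) [∀ i, AddCommGroup (A i)] [∀ i, Module R (A i)]
    (htf : ∀ (i : ℤ) (x : A i), (p : R) • x = 0 → x = 0)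
    (δ : ∀ i : ℤ, A i →ₗ[R] A (i + 1))
    (γ : ∀ i : ℤ, A i →ₗ[R] A (i + 1 + 1))
    (hδδ : ∀ i : ℤ, (δ (i + 1)).comp (δ i) = ((p : R) ^ 2) • γ i) :
    -- the submodule `p ⬝ 𝒜ᵢ`:
    let pA : ∀ i : ℤ, Submodule R (A i) := fun i =>
      LinearMap.range ((p : R) • (LinearMap.id : A i →ₗ[R] A i))
    -- the differential `dᵢ : 𝒜ᵢ ⊕ 𝒜ᵢ₊₁ → 𝒜ᵢ₊₁ ⊕ 𝒜ᵢ₊₂`: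
    let d : ∀ i : ℤ, (A i × A (i + 1)) →ₗ[R] (A (i + 1) × A (i + 1 + 1)) := fun i =>
      LinearMap.prod
        ((δ i).comp (LinearMap.fst R (A i) (A (i + 1))) +
          (((i.negOnePow : ℤˣ) : ℤ) • ((p : R) • LinearMap.snd R (A i) (A (i + 1)))))
        ((((i.negOnePow : ℤˣ) : ℤ) • ((p : R) • ((γ i).comp (LinearMap.fst R (A i) (A (i + 1)))))) +
          (δ (i + 1)).comp (LinearMap.snd R (A i) (A (i + 1))))
    -- the reduction `δ̄ᵢ : 𝒜ᵢ/p𝒜ᵢ → 𝒜ᵢ₊₁/p𝒜ᵢ₊₁` of `δᵢ` modulo `p`: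
    let δbar : ∀ i : ℤ, (A i ⧸ pA i) →ₗ[R] (A (i + 1) ⧸ pA (i + 1)) := fun i =>
      Submodule.mapQ (pA i) (pA (i + 1)) (δ i)
        (by rintro x ⟨y, rfl⟩; exact ⟨δ i y, by simp⟩)
    -- the degreewise surjection `Cᵢ → 𝒜ᵢ/p𝒜ᵢ`, `(x, y) ↦ x mod p`:
    let π : ∀ i : ℤ, (A i × A (i + 1)) →ₗ[R] (A i ⧸ pA i) := fun i =>
      (pA i).mkQ.comp (LinearMap.fst R (A i) (A (i + 1)))
    -- (a) `(C, d)` is a cochain complex: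
    (∀ i : ℤ, (d (i + 1)).comp (d i) = 0) ∧
    -- (b) `(𝒜/p𝒜, δ̄)` is a cochain complex:
    (∀ i : ℤ, (δbar (i + 1)).comp (δbar i) = 0) ∧
    -- (c) the `π i` form a morphism of complexes ...
    (∀ i : ℤ, (π (i + 1)).comp (d i) = (δbar i).comp (π i)) ∧
    -- ... which is injective on cohomology ...
    (∀ (i : ℤ) (c : A (i + 1) × A (i + 1 + 1)), d (i + 1) c = 0 →
      π (i + 1) c ∈ LinearMap.range (δbar i) → c ∈ LinearMap.range (d i)) ∧
    -- ... and surjective on cohomology.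
    (∀ (i : ℤ) (a : A (i + 1) ⧸ pA (i + 1)), δbar (i + 1) a = 0 →
      ∃ c : A (i + 1) × A (i + 1 + 1), d (i + 1) c = 0 ∧
        π (i + 1) c - a ∈ LinearMap.range (δbar i)) :=
  torsionfree_resolution_quasi_iso_general
    (fun i => isSMulRegular_iff_right_eq_zero_of_smul.mpr (htf i)) δ γ hδδ
end

section
/- Let R be a commutative ring, p a prime, and 0 → K →^β E →^α Q → 0 a short exact sequence of R-modules with K and Q flat over R. For 0 ≤ j ≤ p let G^j ⊆ E^{⊗p} be the sum, over subsets S ⊆ {1, …, p} with |S| = j, of the images of the maps M_1 ⊗ ⋯ ⊗ M_p → E^{⊗p}, where M_i = K (mapped via β) for i ∈ S and M_i = E otherwise; the cyclic permutation action of C_p on E^{⊗p} preserves each G^j. Then: (a) α^{⊗p}: E^{⊗p} → Q^{⊗p} is surjective with kernel G^1, so it induces a C_p-equivariant isomorphism G^0/G^1 ≅ Q^{⊗p}, where C_p acts on Q^{⊗p} by cyclic permutation; (b) there is a C_p-equivariant isomorphism ℤ[C_p] ⊗_ℤ (K ⊗_R Q^{⊗(p−1)}) ≅ G^1/G^2,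 where C_p acts on the left-hand side by left translation on the group ring ℤ[C_p] and trivially on K ⊗_R Q^{⊗(p−1)}; explicitly, the identity group element tensor k ⊗ q₁ ⊗ ⋯ ⊗ q_{p−1} is sent to the class of β(k) ⊗ q̃₁ ⊗ ⋯ ⊗ q̃_{p−1} in G^1/G^2, for arbitrary lifts q̃_i ∈ E of the q_i ∈ Q (this is well defined modulo G^2). -/
/-!
Statement 12: Let `0 → K →β E →α Q → 0` be a short exact sequence of `R`-modules with `K`, `Q`
flat, `p` a prime, and for `0 ≤ j ≤ p` let `Gʲ ⊆ E^{⊗p}` be the span of the pure tensors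
having at least (equivalently, exactly) `j` factors in `β(K)` (the sum over `j`-element
subsets `S` of the images of `⨂ᵢ Mᵢ` where `Mᵢ = K` for `i ∈ S` and `Mᵢ = E` otherwise).
The cyclic permutation action of `C_p` preserves each `Gʲ`.  Then:
(a) `α^{⊗p}` is surjective with kernel `G¹` (and `G⁰ = E^{⊗p}`), and it is
`C_p`-equivariant — so it induces a `C_p`-equivariant isomorphism `G⁰/G¹ ≅ Q^{⊗p}`;
(b) there is a `C_p`-equivariant isomorphism `ℤ[C_p] ⊗_ℤ (K ⊗_R Q^{⊗(p−1)}) ≅ G¹/G²`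
(below, the tensor factors are written in the order `(K ⊗_R Q^{⊗(p−1)}) ⊗_ℤ ℤ[C_p]`),
where `C_p` acts by left translation on `ℤ[C_p]` and trivially on `K ⊗ Q^{⊗(p−1)}`,
sending `(k ⊗ q₁ ⊗ ⋯ ⊗ q_{p−1}) ⊗ 1` to the class of `β(k) ⊗ q̃₁ ⊗ ⋯ ⊗ q̃_{p−1}` for
arbitrary lifts `q̃ᵢ ∈ E` of the `qᵢ` (well defined modulo `G²`).  Here `Q^{⊗(p−1)}` is
indexed by the `p − 1` positions `{i : Fin p // i ≠ 0}`.
-/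

open scoped TensorProduct

/-!
A multilinear map on `Eᵖ` that vanishes as soon as one entry lies in `ker α` factors through `Qᵖ`;
applied to `E^{⊗p} → E^{⊗p}/G¹` this identifies `ker α^{⊗p}` with `G¹`.

Inserting `β k` at a fixed position gives `K ⊗ E^{⊗(p-1)} → G¹/G²`, which by right exactness of
`K ⊗ -` descends to `f : K ⊗ Q^{⊗(p-1)} → G¹/G²`. Applying `α` at all the other positions is a map
`G¹/G² → E ⊗ Q^{⊗(p-1)}` that restricts to `β ⊗ id` along `f`, injective as `Q^{⊗(p-1)}` is flat,
and kills the translates `γ f` with `γ ≠ 1`. Since the group permutes the positions simply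
transitively, `G¹/G²` is the direct sum of these translates, that is, an induced representation.
-/

namespace TensorFiltration

section PiTensorProduct

variable {R ι : Type*} [CommRing R] {M M' : ι → Type*}
  [∀ i, AddCommGroup (M i)] [∀ i, Module R (M i)] [∀ i, AddCommGroup (M' i)] [∀ i, Module R (M' i)]

lemma piTensorProduct_map_surjective {f : ∀ i, M i →ₗ[R] M' i}
    (hf : ∀ i, Function.Surjective (f i)) : Function.Surjective (PiTensorProduct.map f) := by
  rw [← LinearMap.range_eq_top, PiTensorProduct.map_range_eq_span_tprod, eq_top_iff,
    ← PiTensorProduct.span_tprod_eq_top]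
  refine Submodule.span_mono ?_
  rintro _ ⟨m, rfl⟩
  choose v hv using fun i => hf i (m i)
  exact ⟨v, congrArg _ (funext hv)⟩

variable [Finite ι] {N : Type*} [AddCommGroup N] [Module R N]

lemma multilinearMap_eq_of_map_eq (f : ∀ i, M i →ₗ[R] M' i) (g : MultilinearMap R M N)
    (hg : ∀ v i, f i (v i) = 0 → g v = 0) {v w : ∀ i, M i} (hvw : ∀ i, f i (v i) = f i (w i)) :
    g v = g w := by
  classical
  have := Fintype.ofFinite ι
  have hsub (i : ι) : f i ((v - w) i) = 0 := by rw [Pi.sub_apply, map_sub, hvw, sub_self]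
  rw [← add_sub_cancel w v, g.map_add_univ, Finset.sum_eq_single Finset.univ]
  · rw [Finset.piecewise_univ]
  · intro s _ hs
    obtain ⟨i, hi⟩ : ∃ i, i ∉ s := by simpa [Finset.eq_univ_iff_forall] using hs
    exact hg _ i (by rw [Finset.piecewise_eq_of_notMem _ _ _ hi, hsub])
  · exact fun h => absurd (Finset.mem_univ _) h

lemma exists_multilinearMap_compLinearMap_eq {f : ∀ i, M i →ₗ[R] M' i}
    (hf : ∀ i, Function.Surjective (f i)) (g : MultilinearMap R M N)
    (hg : ∀ v i, f i (v i) = 0 → g v = 0) :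
    ∃ g' : MultilinearMap R M' N, g'.compLinearMap f = g := by
  classical
  choose s hs using hf
  have hlift (m : ∀ i, M' i) (i : ι) (x : M' i) (y : M i) (hxy : f i y = x) :
      g (fun j => s j (Function.update m i x j)) =
        g (Function.update (fun j => s j (m j)) i y) := by
    refine multilinearMap_eq_of_map_eq f g hg fun j => ?_
    rcases eq_or_ne j i with rfl | hj <;> simp [*]
  let g' : MultilinearMap R M' N := MultilinearMap.mk' (fun m => g fun i => s i (m i))
    (fun m i x y => by
      rw [hlift m i (x + y) (s i x + s i y) (by simp [hs]), g.map_update_add,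
        hlift m i x (s i x) (hs i x), hlift m i y (s i y) (hs i y)])
    (fun m i c x => by
      rw [hlift m i (c • x) (c • s i x) (by simp [hs]), g.map_update_smul,
        hlift m i x (s i x) (hs i x)])
  exact ⟨g', MultilinearMap.ext fun v => multilinearMap_eq_of_map_eq f g hg fun i => hs i _⟩

end PiTensorProduct

theorem flat_piTensorProduct (R : Type*) [CommRing R] (ι : Type*) [Finite ι] (M : ι → Type*)
    [∀ i, AddCommGroup (M i)] [∀ i, Module R (M i)] [∀ i, Module.Flat R (M i)] :
    Module.Flat R (⨂[R] i, M i) := by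
  induction ι using Finite.induction_empty_option with
  | of_equiv e ih =>
    have := ih fun i => M (e i)
    exact Module.Flat.of_linearEquiv (PiTensorProduct.reindex R M e.symm)
  | h_empty => exact Module.Flat.of_linearEquiv (PiTensorProduct.isEmptyEquiv PEmpty)
  | @h_option κ _ ih =>
    have : Module.Flat R (⨂[R] i : Unit, M ((Equiv.optionEquivSumPUnit κ).symm (.inr i))) :=
      Module.Flat.of_linearEquiv (PiTensorProduct.subsingletonEquiv Unit.unit)
    have : Module.Flat R (⨂[R] i : κ, M ((Equiv.optionEquivSumPUnit κ).symm (.inl i))) := ih _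
    exact Module.Flat.of_linearEquiv
      ((PiTensorProduct.reindex R M (Equiv.optionEquivSumPUnit κ)).trans
        (PiTensorProduct.tmulEquivDep R
          fun i => M ((Equiv.optionEquivSumPUnit κ).symm i)).symm)

section Filtration

variable {R E : Type*} [CommRing R] [AddCommGroup E] [Module R E]

/-- The `j`-th step `Gʲ` of the filtration of `E^{⊗ι}` by the number of tensor factors in `N`. It
is spanned by the pure tensors with factors in `N` at the positions of a `j`-element set, so it is
zero when `j` exceeds the size of `ι`. -/
def tensorFiltration (N : Submodule R E) (ι : Type*) (j : ℕ) : Submodule R (⨂[R] _ : ι, E) :=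
  Submodule.span R {x | ∃ (v : ι → E) (s : Finset ι), s.card = j ∧ (∀ i ∈ s, v i ∈ N) ∧
    x = ⨂ₜ[R] i, v i}

variable {N : Submodule R E} {ι κ : Type*} {j : ℕ}

lemma tprod_mem_tensorFiltration {v : ι → E} (s : Finset ι) (hs : s.card = j)
    (hv : ∀ i ∈ s, v i ∈ N) : (⨂ₜ[R] i, v i) ∈ tensorFiltration N ι j :=
  Submodule.subset_span ⟨v, s, hs, hv, rfl⟩

lemma tensorFiltration_le_iff {P : Submodule R (⨂[R] _ : ι, E)} :
    tensorFiltration N ι j ≤ P ↔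
      ∀ (v : ι → E) (s : Finset ι), s.card = j → (∀ i ∈ s, v i ∈ N) → (⨂ₜ[R] i, v i) ∈ P := by
  refine ⟨fun h v s hs hv => h (tprod_mem_tensorFiltration s hs hv), fun h => ?_⟩
  refine Submodule.span_le.2 ?_
  rintro _ ⟨v, s, hs, hv, rfl⟩
  exact h v s hs hv

lemma tensorFiltration_one_le_iff {P : Submodule R (⨂[R] _ : ι, E)} :
    tensorFiltration N ι 1 ≤ P ↔ ∀ (v : ι → E) (i : ι), v i ∈ N → (⨂ₜ[R] i, v i) ∈ P := by
  simp only [tensorFiltration_le_iff, Finset.card_eq_one]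
  refine ⟨fun h v i hi => h v {i} ⟨i, rfl⟩ (by simpa using hi), ?_⟩
  rintro h v _ ⟨i, rfl⟩ hv
  exact h v i (hv i (Finset.mem_singleton_self i))

lemma tensorFiltration_zero : tensorFiltration N ι 0 = ⊤ := by
  rw [eq_top_iff, ← PiTensorProduct.span_tprod_eq_top, Submodule.span_le]
  rintro _ ⟨v, rfl⟩
  exact tprod_mem_tensorFiltration ∅ Finset.card_empty (by simp)

lemma tensorFiltration_le_comap_reindex (e : ι ≃ κ) :
    tensorFiltration N ι j ≤
      (tensorFiltration N κ j).comap (PiTensorProduct.reindex R (fun _ => E) e).toLinearMap := by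
  refine tensorFiltration_le_iff.2 fun v s hs hv => ?_
  rw [Submodule.mem_comap, LinearEquiv.coe_coe, PiTensorProduct.reindex_tprod]
  refine tprod_mem_tensorFiltration (s.map e.toEmbedding) (by simpa using hs) fun i hi => ?_
  exact hv _ (Finset.mem_map_equiv.1 hi)

theorem ker_piTensorProduct_map {Q : Type*} [AddCommGroup Q] [Module R Q] [Finite ι]
    {α : E →ₗ[R] Q} (hα : Function.Surjective α) :
    LinearMap.ker (PiTensorProduct.map fun _ : ι => α) =
      tensorFiltration (LinearMap.ker α) ι 1 := by
  apply le_antisymm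
  · obtain ⟨g, hg⟩ := exists_multilinearMap_compLinearMap_eq (fun _ => hα)
      ((tensorFiltration (LinearMap.ker α) ι 1).mkQ.compMultilinearMap (PiTensorProduct.tprod R))
      fun v i hv => (Submodule.Quotient.mk_eq_zero _).2
        (tensorFiltration_one_le_iff.1 le_rfl v i hv)
    have hlift : PiTensorProduct.lift g ∘ₗ PiTensorProduct.map (fun _ => α) =
        (tensorFiltration (LinearMap.ker α) ι 1).mkQ := by
      rw [PiTensorProduct.lift_comp_map, hg]
      exact PiTensorProduct.ext (by ext; simp)
    rw [← Submodule.ker_mkQ (tensorFiltration _ ι 1), ← hlift]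
    exact LinearMap.ker_le_ker_comp _ _
  · refine tensorFiltration_one_le_iff.2 fun v i hv => ?_
    rw [LinearMap.mem_ker, PiTensorProduct.map_tprod]
    exact (PiTensorProduct.tprod R).map_coord_zero i hv

end Filtration

section Split

variable {R E K Q ι : Type*} [CommRing R] [AddCommGroup E] [Module R E] [AddCommGroup K]
  [Module R K] [AddCommGroup Q] [Module R Q] [DecidableEq ι]

variable (R E) in
/-- The isomorphism `E^{⊗ι} ≃ E ⊗ E^{⊗(ι \ i₀)}` singling out the tensor factor at `i₀`. -/
noncomputable def tensorSplitAt (i₀ : ι) :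
    (⨂[R] _ : ι, E) ≃ₗ[R] E ⊗[R] (⨂[R] _ : {i // i ≠ i₀}, E) :=
  (PiTensorProduct.equivPiTensorComplSingletonTensor R (fun _ => E) i₀).trans
    (TensorProduct.comm R _ _)

lemma tensorSplitAt_tprod (i₀ : ι) (v : ι → E) :
    tensorSplitAt R E i₀ (⨂ₜ[R] i, v i) = v i₀ ⊗ₜ (⨂ₜ[R] i : {i // i ≠ i₀}, v i) :=
  congrArg (TensorProduct.comm R _ _)
    (PiTensorProduct.equivPiTensorComplSingletonTensor_tprod R (fun _ => E) i₀ v)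

lemma tensorSplitAt_symm_tmul_tprod (i₀ : ι) (x : E) (v : {i // i ≠ i₀} → E) :
    (tensorSplitAt R E i₀).symm (x ⊗ₜ (⨂ₜ[R] i, v i)) =
      ⨂ₜ[R] i, if h : i = i₀ then x else v ⟨i, h⟩ := by
  rw [LinearEquiv.symm_apply_eq, tensorSplitAt_tprod, dif_pos rfl]
  congr! with i
  rw [dif_neg i.2]

lemma tensorSplitAt_symm_tmul_mem {N : Submodule R E} {i₀ : ι} {j : ℕ} {x : E} (hx : x ∈ N)
    {y : ⨂[R] _ : {i // i ≠ i₀}, E} (hy : y ∈ tensorFiltration N {i // i ≠ i₀} j) :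
    (tensorSplitAt R E i₀).symm (x ⊗ₜ y) ∈ tensorFiltration N ι (j + 1) := by
  suffices tensorFiltration N {i // i ≠ i₀} j ≤ (tensorFiltration N ι (j + 1)).comap
      ((tensorSplitAt R E i₀).symm.toLinearMap ∘ₗ TensorProduct.mk R _ _ x) from this hy
  refine tensorFiltration_le_iff.2 fun v s hs hv => ?_
  simp only [Submodule.mem_comap, LinearMap.comp_apply, TensorProduct.mk_apply,
    LinearEquiv.coe_coe, tensorSplitAt_symm_tmul_tprod]
  refine tprod_mem_tensorFiltration (insert i₀ (s.map (.subtype _))) ?_ fun i hi => ?_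
  · rw [Finset.card_insert_of_notMem (by simp), Finset.card_map, hs]
  · rcases Finset.mem_insert.1 hi with rfl | hi
    · rwa [dif_pos rfl]
    · obtain ⟨i, his, rfl⟩ := Finset.mem_map.1 hi
      rw [Function.Embedding.subtype_apply, dif_neg i.2]
      exact hv i his

/-- The map `K ⊗ E^{⊗(ι \ i₀)} → E^{⊗ι}` applying `β` to the `K`-factor and placing
it at `i₀`. -/
noncomputable def tensorInsertAt (i₀ : ι) (β : K →ₗ[R] E) :
    K ⊗[R] (⨂[R] _ : {i // i ≠ i₀}, E) →ₗ[R] ⨂[R] _ : ι, E :=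
  (tensorSplitAt R E i₀).symm.toLinearMap ∘ₗ β.rTensor _

lemma tensorInsertAt_tmul_tprod (i₀ : ι) (β : K →ₗ[R] E) (k : K) (v : {i // i ≠ i₀} → E) :
    tensorInsertAt i₀ β (k ⊗ₜ (⨂ₜ[R] i, v i)) =
      ⨂ₜ[R] i, if h : i = i₀ then β k else v ⟨i, h⟩ :=
  tensorSplitAt_symm_tmul_tprod i₀ (β k) v

lemma tensorInsertAt_mem (i₀ : ι) (β : K →ₗ[R] E) (t : K ⊗[R] (⨂[R] _ : {i // i ≠ i₀}, E)) :
    tensorInsertAt i₀ β t ∈ tensorFiltration (LinearMap.range β) ι 1 := by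
  induction t with
  | zero => rw [map_zero]; exact zero_mem _
  | add x y hx hy => rw [map_add]; exact add_mem hx hy
  | tmul k y =>
    refine tensorSplitAt_symm_tmul_mem (LinearMap.mem_range_self β k) ?_
    rw [tensorFiltration_zero]
    exact Submodule.mem_top

/-- The map `E^{⊗ι} → E ⊗ Q^{⊗(ι \ i₀)}` applying `α` to every tensor factor but the
one at `i₀`. -/
noncomputable def tensorProjAt (i₀ : ι) (α : E →ₗ[R] Q) :
    (⨂[R] _ : ι, E) →ₗ[R] E ⊗[R] (⨂[R] _ : {i // i ≠ i₀}, Q) :=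
  (PiTensorProduct.map fun _ => α).lTensor E ∘ₗ (tensorSplitAt R E i₀).toLinearMap

lemma tensorProjAt_tensorInsertAt (i₀ : ι) (β : K →ₗ[R] E) (α : E →ₗ[R] Q)
    (t : K ⊗[R] (⨂[R] _ : {i // i ≠ i₀}, E)) :
    tensorProjAt i₀ α (tensorInsertAt i₀ β t) =
      β.rTensor _ ((PiTensorProduct.map fun _ => α).lTensor K t) := by
  rw [tensorProjAt, tensorInsertAt, LinearMap.comp_apply, LinearMap.comp_apply,
    LinearEquiv.coe_coe, LinearEquiv.coe_coe, LinearEquiv.apply_symm_apply]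
  simp only [← LinearMap.comp_apply, LinearMap.lTensor_comp_rTensor,
    LinearMap.rTensor_comp_lTensor]

lemma tensorProjAt_tprod_eq_zero {i₀ i : ι} (hi : i ≠ i₀) {α : E →ₗ[R] Q} {v : ι → E}
    (hv : α (v i) = 0) : tensorProjAt i₀ α (⨂ₜ[R] i, v i) = 0 := by
  rw [tensorProjAt, LinearMap.comp_apply, LinearEquiv.coe_coe, tensorSplitAt_tprod,
    LinearMap.lTensor_tmul, PiTensorProduct.map_tprod,
    (PiTensorProduct.tprod R).map_coord_zero ⟨i, hi⟩ hv, TensorProduct.tmul_zero]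

lemma tensorFiltration_two_le_ker_tensorProjAt (i₀ : ι) {α : E →ₗ[R] Q} {N : Submodule R E}
    (hN : N ≤ LinearMap.ker α) :
    tensorFiltration N ι 2 ≤ LinearMap.ker (tensorProjAt i₀ α) := by
  refine tensorFiltration_le_iff.2 fun v s hs hv => ?_
  obtain ⟨i, his, hi⟩ := Finset.exists_mem_ne (hs ▸ one_lt_two) i₀
  exact tensorProjAt_tprod_eq_zero hi (hN (hv i his))

end Split

section Induced

variable {R Γ T X Y : Type*} [CommRing R] [Group Γ] [AddCommGroup T] [Module R T]
  [AddCommGroup X] [Module R X] [AddCommGroup Y] [Module R Y]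

variable (R Γ T) in
open Classical in
/-- The induced module `T ⊗ ℤ[Γ]` as finitely supported functions: `t ⊗ γ` is `t` placed at `γ`. -/
noncomputable def tensorMonoidAlgebraEquiv : T ⊗[ℤ] MonoidAlgebra ℤ Γ ≃ₗ[R] Γ →₀ T :=
  (TensorProduct.AlgebraTensorModule.congr (LinearEquiv.refl R T)
    (MonoidAlgebra.coeffLinearEquiv ℤ)).trans (TensorProduct.finsuppScalarRight ℤ R T Γ)

lemma tensorMonoidAlgebraEquiv_symm_single (γ : Γ) (t : T) :
    (tensorMonoidAlgebraEquiv R Γ T).symm (Finsupp.single γ t) =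
      t ⊗ₜ MonoidAlgebra.of ℤ Γ γ := by
  rw [LinearEquiv.symm_apply_eq]
  ext δ
  by_cases h : γ = δ <;> simp [tensorMonoidAlgebraEquiv, h]

lemma tensorMonoidAlgebra_induction {P : T ⊗[ℤ] MonoidAlgebra ℤ Γ → Prop} (z)
    (zero : P 0) (add : ∀ x y, P x → P y → P (x + y))
    (tmul_of : ∀ t γ, P (t ⊗ₜ MonoidAlgebra.of ℤ Γ γ)) : P z := by
  obtain ⟨w, rfl⟩ := (tensorMonoidAlgebraEquiv ℤ Γ T).symm.surjective z
  induction w using Finsupp.induction_linear with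
  | zero => rwa [map_zero]
  | add x y hx hy => rw [map_add]; exact add _ _ hx hy
  | single γ t => rw [tensorMonoidAlgebraEquiv_symm_single]; exact tmul_of t γ

/-- The `Γ`-equivariant map out of the induced module `T ⊗ ℤ[Γ]` that Frobenius reciprocity attaches
to `f`; it sends `t ⊗ γ` to `γ • f t`. -/
noncomputable def inducedMap (ρ : Representation R Γ X) (f : T →ₗ[R] X) :
    T ⊗[ℤ] MonoidAlgebra ℤ Γ →ₗ[R] X :=
  Finsupp.lsum R (fun γ => ρ γ ∘ₗ f) ∘ₗ (tensorMonoidAlgebraEquiv R Γ T).toLinearMap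

variable (ρ : Representation R Γ X) (f : T →ₗ[R] X)

lemma inducedMap_tmul_of (t : T) (γ : Γ) :
    inducedMap ρ f (t ⊗ₜ MonoidAlgebra.of ℤ Γ γ) = ρ γ (f t) := by
  rw [inducedMap, LinearMap.comp_apply, ← tensorMonoidAlgebraEquiv_symm_single (R := R),
    LinearEquiv.coe_coe, LinearEquiv.apply_symm_apply, Finsupp.lsum_single, LinearMap.comp_apply]

lemma inducedMap_mulLeft (γ : Γ) (z : T ⊗[ℤ] MonoidAlgebra ℤ Γ) :
    inducedMap ρ f (TensorProduct.map LinearMap.id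
      (LinearMap.mulLeft ℤ (MonoidAlgebra.of ℤ Γ γ)) z) = ρ γ (inducedMap ρ f z) := by
  induction z using tensorMonoidAlgebra_induction with
  | zero => simp only [map_zero]
  | add x y hx hy => simp only [map_add, hx, hy]
  | tmul_of t δ =>
    rw [TensorProduct.map_tmul, LinearMap.mulLeft_apply, ← map_mul, LinearMap.id_apply,
      inducedMap_tmul_of, inducedMap_tmul_of, map_mul, Module.End.mul_apply]

variable {ρ f}

lemma inducedMap_injective (π : X →ₗ[R] Y) (hπf : Function.Injective (π ∘ₗ f))
    (hπ : ∀ γ ≠ 1, ∀ t, π (ρ γ (f t)) = 0) : Function.Injective (inducedMap ρ f) := by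
  have hcoord (γ : Γ) (z) :
      π (ρ γ⁻¹ (inducedMap ρ f z)) = π (f (tensorMonoidAlgebraEquiv R Γ T z γ)) := by
    induction z using tensorMonoidAlgebra_induction with
    | zero => simp
    | add x y hx hy => simp only [map_add, hx, hy, Finsupp.add_apply]
    | tmul_of t δ =>
      rw [inducedMap_tmul_of, ← Module.End.mul_apply, ← map_mul,
        ← tensorMonoidAlgebraEquiv_symm_single (R := R), LinearEquiv.apply_symm_apply]
      rcases eq_or_ne δ γ with rfl | hδ
      · rw [inv_mul_cancel, map_one, Module.End.one_apply, Finsupp.single_eq_same]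
      · rw [hπ _ (by rwa [ne_eq, inv_mul_eq_one, eq_comm]), Finsupp.single_eq_of_ne hδ.symm,
          map_zero, map_zero]
  rw [injective_iff_map_eq_zero]
  intro z hz
  refine (tensorMonoidAlgebraEquiv R Γ T).map_eq_zero_iff.1 (Finsupp.ext fun γ => hπf ?_)
  rw [LinearMap.comp_apply, ← hcoord, hz, Finsupp.zero_apply]
  simp only [map_zero]

end Induced

section GrOne

variable {R E K Q ι Γ : Type*} [CommRing R] [AddCommGroup E] [Module R E] [AddCommGroup K]
  [Module R K] [AddCommGroup Q] [Module R Q] [Group Γ]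

variable (R E) in
/-- The representation of `Γ` on `E^{⊗ι}` permuting the tensor factors along `θ`. -/
noncomputable def permTensorRep (θ : Γ →* Equiv.Perm ι) :
    Representation R Γ (⨂[R] _ : ι, E) where
  toFun γ := (PiTensorProduct.reindex R (fun _ => E) (θ γ)).toLinearMap
  map_one' := by
    rw [map_one, Equiv.Perm.one_def, PiTensorProduct.reindex_refl]
    rfl
  map_mul' γ δ := by
    rw [map_mul]
    exact congrArg LinearEquiv.toLinearMap (PiTensorProduct.reindex_trans (θ δ) (θ γ)).symm

lemma permTensorRep_tprod (θ : Γ →* Equiv.Perm ι) (γ : Γ) (v : ι → E) :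
    permTensorRep R E θ γ (⨂ₜ[R] i, v i) = ⨂ₜ[R] i, v ((θ γ).symm i) :=
  PiTensorProduct.reindex_tprod _ _

/-- The `j`-th graded piece `Gʲ/Gʲ⁺¹` of `tensorFiltration`. -/
abbrev TensorGr (N : Submodule R E) (ι : Type*) (j : ℕ) : Type _ :=
  tensorFiltration N ι j ⧸ (tensorFiltration N ι (j + 1)).submoduleOf (tensorFiltration N ι j)

/-- The representation that `permTensorRep` induces on `Gʲ/Gʲ⁺¹`. -/
noncomputable def permTensorGrRep (θ : Γ →* Equiv.Perm ι) (N : Submodule R E) (j : ℕ) :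
    Representation R Γ (TensorGr N ι j) :=
  ((permTensorRep R E θ).subrepresentation (tensorFiltration N ι j)
    fun γ => tensorFiltration_le_comap_reindex (θ γ)).quotient _
    fun γ _ hx => tensorFiltration_le_comap_reindex (θ γ) hx

variable [DecidableEq ι]

/-- The map `K ⊗ E^{⊗(ι \ i₀)} → G¹/G²` induced by `tensorInsertAt`. -/
noncomputable def grOneInsert (i₀ : ι) (β : K →ₗ[R] E) :
    K ⊗[R] (⨂[R] _ : {i // i ≠ i₀}, E) →ₗ[R] TensorGr (LinearMap.range β) ι 1 :=
  Submodule.mkQ _ ∘ₗ (tensorInsertAt i₀ β).codRestrict _ (tensorInsertAt_mem i₀ β)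

/-- The map `G¹/G² → E ⊗ Q^{⊗(ι \ i₀)}` induced by `tensorProjAt`, used to
detect the summand of `G¹/G²` at `i₀`. -/
noncomputable def grOneProj (i₀ : ι) {α : E →ₗ[R] Q} {N : Submodule R E}
    (hN : N ≤ LinearMap.ker α) : TensorGr N ι 1 →ₗ[R] E ⊗[R] (⨂[R] _ : {i // i ≠ i₀}, Q) :=
  Submodule.liftQ _ ((tensorProjAt i₀ α).domRestrict (tensorFiltration N ι 1))
    fun _ hx => tensorFiltration_two_le_ker_tensorProjAt i₀ hN hx

lemma grOneProj_permTensorGrRep_grOneInsert {θ : Γ →* Equiv.Perm ι} {i₀ : ι} {γ : Γ}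
    (hγ : θ γ i₀ ≠ i₀) {β : K →ₗ[R] E} {α : E →ₗ[R] Q}
    (hN : LinearMap.range β ≤ LinearMap.ker α) (t : K ⊗[R] (⨂[R] _ : {i // i ≠ i₀}, E)) :
    grOneProj i₀ hN (permTensorGrRep θ (LinearMap.range β) 1 γ (grOneInsert i₀ β t)) = 0 := by
  suffices tensorProjAt i₀ α ∘ₗ permTensorRep R E θ γ ∘ₗ tensorInsertAt i₀ β = 0 from
    LinearMap.congr_fun this t
  refine TensorProduct.ext (LinearMap.ext fun k => PiTensorProduct.ext
    (MultilinearMap.ext fun v => ?_))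
  change tensorProjAt i₀ α
    (permTensorRep R E θ γ (tensorInsertAt i₀ β (k ⊗ₜ (⨂ₜ[R] i, v i)))) = 0
  rw [tensorInsertAt_tmul_tprod, permTensorRep_tprod]
  refine tensorProjAt_tprod_eq_zero hγ ?_
  rw [Equiv.symm_apply_apply, dif_pos rfl]
  exact hN (LinearMap.mem_range_self β k)

lemma exists_permTensorRep_tensorInsertAt_eq_tprod {θ : Γ →* Equiv.Perm ι} {i₀ : ι}
    (hθ : Function.Surjective fun γ => θ γ i₀) {β : K →ₗ[R] E} {v : ι → E} {i : ι}
    (hi : v i ∈ LinearMap.range β) :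
    ∃ γ t, permTensorRep R E θ γ (tensorInsertAt i₀ β t) = ⨂ₜ[R] i, v i := by
  obtain ⟨γ, rfl⟩ := hθ i
  obtain ⟨k, hk⟩ := hi
  refine ⟨γ, k ⊗ₜ (⨂ₜ[R] i, v (θ γ i)), ?_⟩
  rw [tensorInsertAt_tmul_tprod, permTensorRep_tprod]
  congr! with i
  split_ifs with h
  · rw [hk, ← h]
    exact congrArg v ((θ γ).apply_symm_apply i)
  · rw [Equiv.apply_symm_apply]

variable [Finite ι]

lemma ker_lTensor_le_ker_grOneInsert (i₀ : ι) {β : K →ₗ[R] E} {α : E →ₗ[R] Q}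
    (hα : Function.Surjective α) (hexact : LinearMap.range β = LinearMap.ker α) :
    LinearMap.ker ((PiTensorProduct.map fun _ : {i // i ≠ i₀} => α).lTensor K) ≤
      LinearMap.ker (grOneInsert i₀ β) := by
  have hsurj := piTensorProduct_map_surjective fun _ : {i // i ≠ i₀} => hα
  rw [LinearMap.exact_iff.1 (lTensor_exact K (LinearMap.exact_subtype_ker_map _) hsurj),
    LinearMap.range_le_ker_iff]
  refine TensorProduct.ext' fun k y => ?_
  have hy : y.1 ∈ tensorFiltration (LinearMap.range β) {i // i ≠ i₀} 1 := by
    rw [hexact, ← ker_piTensorProduct_map hα]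
    exact y.2
  exact (Submodule.Quotient.mk_eq_zero _).2
    (tensorSplitAt_symm_tmul_mem (LinearMap.mem_range_self β k) hy)

/-- The map `K ⊗ Q^{⊗(ι \ i₀)} → G¹/G²` through which `grOneInsert` factors: the summand of `G¹/G²`
at `i₀`. -/
noncomputable def grOneSummand (i₀ : ι) {β : K →ₗ[R] E} {α : E →ₗ[R] Q}
    (hα : Function.Surjective α) (hexact : LinearMap.range β = LinearMap.ker α) :
    K ⊗[R] (⨂[R] _ : {i // i ≠ i₀}, Q) →ₗ[R] TensorGr (LinearMap.range β) ι 1 :=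
  Submodule.liftQ _ (grOneInsert i₀ β) (ker_lTensor_le_ker_grOneInsert i₀ hα hexact) ∘ₗ
    (LinearMap.quotKerEquivOfSurjective _ (LinearMap.lTensor_surjective K
      (piTensorProduct_map_surjective fun _ : {i // i ≠ i₀} => hα))).symm.toLinearMap

lemma grOneSummand_lTensor (i₀ : ι) {β : K →ₗ[R] E} {α : E →ₗ[R] Q}
    (hα : Function.Surjective α) (hexact : LinearMap.range β = LinearMap.ker α)
    (t : K ⊗[R] (⨂[R] _ : {i // i ≠ i₀}, E)) :
    grOneSummand i₀ hα hexact ((PiTensorProduct.map fun _ => α).lTensor K t) =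
      grOneInsert i₀ β t := by
  rw [grOneSummand, LinearMap.comp_apply, LinearEquiv.coe_coe,
    LinearMap.quotKerEquivOfSurjective_symm_apply, Submodule.liftQ_apply]

lemma grOneProj_comp_grOneSummand (i₀ : ι) {β : K →ₗ[R] E} {α : E →ₗ[R] Q}
    (hα : Function.Surjective α) (hexact : LinearMap.range β = LinearMap.ker α) :
    grOneProj i₀ hexact.le ∘ₗ grOneSummand i₀ hα hexact = β.rTensor _ := by
  refine LinearMap.ext fun t => ?_
  obtain ⟨t, rfl⟩ := LinearMap.lTensor_surjective K
    (piTensorProduct_map_surjective fun _ : {i // i ≠ i₀} => hα) t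
  rw [LinearMap.comp_apply, grOneSummand_lTensor, ← tensorProjAt_tensorInsertAt]
  rfl

theorem inducedMap_grOneSummand_injective [Module.Flat R Q] {θ : Γ →* Equiv.Perm ι} {i₀ : ι}
    (hθ : Function.Injective fun γ => θ γ i₀) {β : K →ₗ[R] E} {α : E →ₗ[R] Q}
    (hβ : Function.Injective β) (hα : Function.Surjective α)
    (hexact : LinearMap.range β = LinearMap.ker α) :
    Function.Injective (inducedMap (permTensorGrRep θ (LinearMap.range β) 1)
      (grOneSummand i₀ hα hexact)) := by
  have := flat_piTensorProduct R {i // i ≠ i₀} fun _ => Q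
  refine inducedMap_injective (grOneProj i₀ hexact.le) ?_ fun γ hγ t => ?_
  · rw [grOneProj_comp_grOneSummand]
    exact Module.Flat.rTensor_preserves_injective_linearMap β hβ
  · obtain ⟨t, rfl⟩ := LinearMap.lTensor_surjective K
      (piTensorProduct_map_surjective fun _ : {i // i ≠ i₀} => hα) t
    have hmove : θ γ i₀ ≠ i₀ := by
      simpa only [map_one, Equiv.Perm.one_apply] using hθ.ne hγ
    rw [grOneSummand_lTensor, grOneProj_permTensorGrRep_grOneInsert hmove]

theorem inducedMap_grOneSummand_surjective {θ : Γ →* Equiv.Perm ι} {i₀ : ι}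
    (hθ : Function.Surjective fun γ => θ γ i₀) {β : K →ₗ[R] E} {α : E →ₗ[R] Q}
    (hα : Function.Surjective α) (hexact : LinearMap.range β = LinearMap.ker α) :
    Function.Surjective (inducedMap (permTensorGrRep θ (LinearMap.range β) 1)
      (grOneSummand i₀ hα hexact)) := by
  suffices tensorFiltration (LinearMap.range β) ι 1 ≤
      ((LinearMap.range (inducedMap (permTensorGrRep θ (LinearMap.range β) 1)
        (grOneSummand i₀ hα hexact))).comap (Submodule.mkQ _)).map (Submodule.subtype _) by
    intro x
    obtain ⟨x, rfl⟩ := Submodule.mkQ_surjective _ x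
    obtain ⟨y, hy, hyx⟩ := this x.2
    exact Subtype.ext hyx ▸ hy
  refine tensorFiltration_one_le_iff.2 fun v i hi => ?_
  obtain ⟨γ, t, ht⟩ := exists_permTensorRep_tensorInsertAt_eq_tprod hθ hi
  refine ⟨⟨_, tensorFiltration_one_le_iff.1 le_rfl v i hi⟩,
    ⟨(PiTensorProduct.map fun _ => α).lTensor K t ⊗ₜ MonoidAlgebra.of ℤ Γ γ, ?_⟩, rfl⟩
  rw [inducedMap_tmul_of, grOneSummand_lTensor]
  exact congrArg (Submodule.mkQ _) (Subtype.ext ht)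

end GrOne

/-- The action of `C_n`, written as `Multiplicative (ZMod n)`, on `Fin n` by translation. -/
def cyclicShift (n : ℕ) [NeZero n] : Multiplicative (ZMod n) →* Equiv.Perm (Fin n) where
  toFun a := finCycle ((ZMod.finEquiv n).symm a.toAdd)
  map_one' := by ext; simp
  map_mul' a b := by ext i; simp [add_comm, add_left_comm]

lemma cyclicShift_apply (n : ℕ) [NeZero n] (a : Multiplicative (ZMod n)) (i : Fin n) :
    cyclicShift n a i = i + (ZMod.finEquiv n).symm a.toAdd := by
  simp [cyclicShift]

lemma cyclicShift_ofAdd_one (n : ℕ) [NeZero n] :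
    cyclicShift n (Multiplicative.ofAdd 1) = finRotate n := by
  ext i
  rw [cyclicShift_apply, toAdd_ofAdd, map_one, finRotate_apply]

lemma cyclicShift_apply_bijective (n : ℕ) [NeZero n] (i : Fin n) :
    Function.Bijective fun a => cyclicShift n a i := by
  simp only [cyclicShift_apply]
  exact (Equiv.addLeft i).bijective.comp
    ((ZMod.finEquiv n).symm.bijective.comp Multiplicative.toAdd.bijective)

end TensorFiltration

open TensorFiltration in
theorem filtration_of_tensor_power_of_extension_general
    {R K E Q ι Γ : Type*} [CommRing R] [AddCommGroup K] [Module R K] [AddCommGroup E] [Module R E]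
    [AddCommGroup Q] [Module R Q] [Module.Flat R Q] [Finite ι] [DecidableEq ι] [Group Γ]
    (θ : Γ →* Equiv.Perm ι) (i₀ : ι) (hθ : Function.Bijective fun γ => θ γ i₀)
    (β : K →ₗ[R] E) (α : E →ₗ[R] Q) (hβ : Function.Injective β) (hα : Function.Surjective α)
    (hexact : LinearMap.range β = LinearMap.ker α) :
    let G := tensorFiltration (LinearMap.range β) ι
    let σE (τ : Equiv.Perm ι) := (PiTensorProduct.reindex R (fun _ => E) τ).toLinearMap
    let σQ (τ : Equiv.Perm ι) := (PiTensorProduct.reindex R (fun _ => Q) τ).toLinearMap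
    let αι : (⨂[R] _ : ι, E) →ₗ[R] ⨂[R] _ : ι, Q := PiTensorProduct.map fun _ => α
    let L := (K ⊗[R] (⨂[R] _ : {i // i ≠ i₀}, Q)) ⊗[ℤ] MonoidAlgebra ℤ Γ
    (∀ τ j, ∀ x ∈ G j, σE τ x ∈ G j) ∧
    (Function.Surjective αι ∧ LinearMap.ker αι = G 1 ∧ G 0 = ⊤ ∧
      ∀ τ, σQ τ ∘ₗ αι = αι ∘ₗ σE τ) ∧
    ∃ e : L ≃ₗ[R] G 1 ⧸ (G 2).submoduleOf (G 1),
      (∀ (k : K) (v : {i // i ≠ i₀} → E)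
        (h₁ : (⨂ₜ[R] i, if h : i = i₀ then β k else v ⟨i, h⟩) ∈ G 1),
        e ((k ⊗ₜ (⨂ₜ[R] i, α (v i))) ⊗ₜ MonoidAlgebra.of ℤ Γ 1) =
          Submodule.Quotient.mk ⟨_, h₁⟩) ∧
      ∀ (γ : Γ) (z : L) (y : ⨂[R] _ : ι, E) (hy : y ∈ G 1) (hy' : σE (θ γ) y ∈ G 1),
        e z = Submodule.Quotient.mk ⟨y, hy⟩ →
          e (TensorProduct.map LinearMap.id (LinearMap.mulLeft ℤ (MonoidAlgebra.of ℤ Γ γ)) z) =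
            Submodule.Quotient.mk ⟨σE (θ γ) y, hy'⟩ := by
  intro G σE σQ αι L
  have hbij : Function.Bijective (inducedMap (permTensorGrRep θ (LinearMap.range β) 1)
      (grOneSummand i₀ hα hexact)) :=
    ⟨inducedMap_grOneSummand_injective hθ.injective hβ hα hexact,
      inducedMap_grOneSummand_surjective hθ.surjective hα hexact⟩
  refine ⟨fun τ _ => tensorFiltration_le_comap_reindex τ,
    ⟨piTensorProduct_map_surjective fun _ => hα,
      (ker_piTensorProduct_map hα).trans (by rw [← hexact]), tensorFiltration_zero,
      fun τ => (PiTensorProduct.map_comp_reindex_eq (fun _ => α) τ).symm⟩,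
    .ofBijective _ hbij, ?_, ?_⟩
  · intro k v h₁
    rw [LinearEquiv.ofBijective_apply, inducedMap_tmul_of, map_one, Module.End.one_apply,
      ← PiTensorProduct.map_tprod, ← LinearMap.lTensor_tmul, grOneSummand_lTensor]
    exact congrArg (Submodule.mkQ _) (Subtype.ext (tensorInsertAt_tmul_tprod i₀ β k v))
  · intro γ z y hy hy' hz
    rw [LinearEquiv.ofBijective_apply] at hz ⊢
    rw [inducedMap_mulLeft, hz]
    rfl

theorem filtration_of_tensor_power_of_extension
    (R : Type) [CommRing R] (p : ℕ) (hp : p.Prime)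
    (K E Q : Type) [AddCommGroup K] [Module R K] [AddCommGroup E] [Module R E]
    [AddCommGroup Q] [Module R Q]
    (hKflat : Module.Flat R K) (hQflat : Module.Flat R Q)
    (β : K →ₗ[R] E) (α : E →ₗ[R] Q)
    (hβ : Function.Injective β) (hα : Function.Surjective α)
    (hexact : LinearMap.range β = LinearMap.ker α) :
    -- the filtration `Gʲ`:
    let G : ℕ → Submodule R (⨂[R] (_ : Fin p), E) := fun j =>
      Submodule.span R
        {x | ∃ (v : Fin p → E) (s : Finset (Fin p)), s.card = j ∧
          (∀ i ∈ s, v i ∈ LinearMap.range β) ∧ x = ⨂ₜ[R] i, v i}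
    -- the generators of the cyclic actions on `E^{⊗p}` and `Q^{⊗p}`:
    let σE : (⨂[R] (_ : Fin p), E) →ₗ[R] ⨂[R] (_ : Fin p), E :=
      (PiTensorProduct.reindex R (fun _ : Fin p => E) (finRotate p)).toLinearMap
    let σQ : (⨂[R] (_ : Fin p), Q) →ₗ[R] ⨂[R] (_ : Fin p), Q :=
      (PiTensorProduct.reindex R (fun _ : Fin p => Q) (finRotate p)).toLinearMap
    -- `α^{⊗p}`:
    let αp : (⨂[R] (_ : Fin p), E) →ₗ[R] ⨂[R] (_ : Fin p), Q :=
      PiTensorProduct.map fun _ => α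
    -- `G¹/G²`:
    let G21 : Submodule R (G 1) := Submodule.comap (G 1).subtype (G 2)
    -- the group ring `ℤ[C_p]` and `ℤ[C_p] ⊗_ℤ (K ⊗_R Q^{⊗(p−1)})`:
    let Cp := Multiplicative (ZMod p)
    let L := (K ⊗[R] (⨂[R] (_ : {i : Fin p // i ≠ ⟨0, hp.pos⟩}), Q)) ⊗[ℤ] MonoidAlgebra ℤ Cp
    -- the generator of `C_p` acting on `L` by left translation on `ℤ[C_p]`
    -- (and trivially on `K ⊗ Q^{⊗(p−1)}`):
    let σL : L →ₗ[ℤ] L :=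
      TensorProduct.map LinearMap.id
        (LinearMap.mulLeft ℤ (MonoidAlgebra.of ℤ Cp (Multiplicative.ofAdd (1 : ZMod p))))
    -- the cyclic action preserves each `Gʲ`:
    (∀ (j : ℕ), ∀ x ∈ G j, σE x ∈ G j) ∧
    -- (a):
    (Function.Surjective αp ∧ LinearMap.ker αp = G 1 ∧ G 0 = ⊤ ∧
      σQ.comp αp = αp.comp σE) ∧
    -- (b):
    (∃ e : L ≃ₗ[R] (G 1 ⧸ G21),
      -- explicit description on generators, with arbitrary lifts `v i` of the `q i`:
      (∀ (kk : K) (v : {i : Fin p // i ≠ ⟨0, hp.pos⟩} → E)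
          (h1 : (⨂ₜ[R] i : Fin p,
            (if h : i = ⟨0, hp.pos⟩ then β kk else v ⟨i, h⟩)) ∈ G 1),
        e ((kk ⊗ₜ[R] (⨂ₜ[R] i, α (v i))) ⊗ₜ[ℤ] (MonoidAlgebra.of ℤ Cp 1)) =
          Submodule.Quotient.mk
            (⟨⨂ₜ[R] i : Fin p, (if h : i = ⟨0, hp.pos⟩ then β kk else v ⟨i, h⟩), h1⟩ :
              G 1)) ∧
      -- `C_p`-equivariance of `e`:
      (∀ (z : L) (y : ⨂[R] (_ : Fin p), E) (hy : y ∈ G 1) (hy' : σE y ∈ G 1),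
        e z = Submodule.Quotient.mk (⟨y, hy⟩ : G 1) →
          e (σL z) = Submodule.Quotient.mk (⟨σE y, hy'⟩ : G 1))) := by
  have : NeZero p := ⟨hp.ne_zero⟩
  obtain ⟨hG, ⟨hsurj, hker, htop, hcomm⟩, e, he, heσ⟩ :=
    filtration_of_tensor_power_of_extension_general
      (TensorFiltration.cyclicShift p) ⟨0, hp.pos⟩
      (TensorFiltration.cyclicShift_apply_bijective p _) β α hβ hα hexact
  refine ⟨hG (finRotate p), ⟨hsurj, hker, htop, hcomm (finRotate p)⟩, e, he, ?_⟩
  exact TensorFiltration.cyclicShift_ofAdd_one p ▸ heσ (Multiplicative.ofAdd 1)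
end
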